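/- For all w1, w2 ∈ H^0 one has Z̄(w1 ш̄ w2) = Z̄(w1) · Z̄(w2); that is, the n-evaluation map Z̄ is multiplicative with respect to the n-shuffle product. -/

import Mathlib

open scoped BigOperators

/-- The two-letter alphabet {x, y}. -/
inductive Letter : Type
  | x : Letter
  | y : Letter
deriving DecidableEq

/-- `H = ℚ⟨x,y⟩`, the noncommutative polynomial ring over ℚ in two
indeterminates, realized as the monoid algebra of the free monoid on `{x,y}`. -/
abbrev H : Type := MonoidAlgebra ℚ (FreeMonoid Letter)

namespace H

/-- The monomial (word) of `H` corresponding to an element of the free monoid. -/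
noncomputable def word (w : FreeMonoid Letter) : H := MonoidAlgebra.single w 1

/-- The generator `x`. -/
noncomputable def X : H := word (FreeMonoid.of Letter.x)

/-- The generator `y`. -/
noncomputable def Y : H := word (FreeMonoid.of Letter.y)

/-- The word `z_k = x^{k-1} y` (for `k ≥ 1`). -/
def zW (k : ℕ) : FreeMonoid Letter :=
  FreeMonoid.ofList (List.replicate (k - 1) Letter.x ++ [Letter.y])

/-- `z_k = x^{k-1} y` as an element of `H`. -/
noncomputable def z (k : ℕ) : H := word (zW k)

/-- A list `[k₁,…,kₙ]` gives the word `z_{k₁} z_{k₂} ⋯ z_{kₙ}`. -/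
def zListW (ks : List ℕ) : FreeMonoid Letter :=
  FreeMonoid.ofList (ks.flatMap fun k => List.replicate (k - 1) Letter.x ++ [Letter.y])

/-- `H¹ = ℚ + Hy` as a ℚ-submodule of `H`. -/
noncomputable def H1 : Submodule ℚ H :=
  LinearMap.range (LinearMap.mulRight ℚ Y) ⊔ Submodule.span ℚ {1}

/-- `H⁰ = ℚ + xHy` as a ℚ-submodule of `H`. -/
noncomputable def H0 : Submodule ℚ H :=
  LinearMap.range ((LinearMap.mulRight ℚ Y).comp (LinearMap.mulLeft ℚ X)) ⊔
    Submodule.span ℚ {1}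

/-- Parse a word of `H¹` into the exponent list of its `z`-decomposition:
`z_{k₁}⋯z_{kₙ} ↦ [k₁,…,kₙ]` (auxiliary accumulator version). -/
def toZAux : List Letter → ℕ → List ℕ
  | [], _ => []
  | Letter.x :: r, n => toZAux r (n + 1)
  | Letter.y :: r, n => (n + 1) :: toZAux r 0

/-- The `z`-decomposition of a word of `H¹`. -/
def toZ (w : FreeMonoid Letter) : List ℕ := toZAux (FreeMonoid.toList w) 0

/-- The harmonic product on words of `H¹` (via `z`-decompositions):
`1 * w = w * 1 = w` and
`z_k w₁ * z_l w₂ = z_k (w₁ * z_l w₂) + z_l (z_k w₁ * w₂) + z_{k+l} (w₁ * w₂)`. -/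
noncomputable def harmW : List ℕ → List ℕ → H
  | [], w => word (zListW w)
  | k :: w1, [] => word (zListW (k :: w1))
  | k :: w1, l :: w2 =>
      z k * harmW w1 (l :: w2) + z l * harmW (k :: w1) w2 + z (k + l) * harmW w1 w2
termination_by w1 w2 => w1.length + w2.length
decreasing_by all_goals simp [Nat.lt_succ_iff] <;> omega

/-- The n-harmonic product on words of `H¹`:
`1 *̄ w = w *̄ 1 = w` and
`z_k w₁ *̄ z_l w₂ = z_k (w₁ *̄ z_l w₂) + z_l (z_k w₁ *̄ w₂) − z_{k+l} (w₁ *̄ w₂)`. -/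
noncomputable def nharmW : List ℕ → List ℕ → H
  | [], w => word (zListW w)
  | k :: w1, [] => word (zListW (k :: w1))
  | k :: w1, l :: w2 =>
      z k * nharmW w1 (l :: w2) + z l * nharmW (k :: w1) w2 - z (k + l) * nharmW w1 w2
termination_by w1 w2 => w1.length + w2.length
decreasing_by all_goals simp [Nat.lt_succ_iff] <;> omega

/-- The harmonic product `*` on `H¹`, extended ℚ-bilinearly. -/
noncomputable def harm (a b : H) : H :=
  Finsupp.sum a.coeff fun w1 c1 =>
    Finsupp.sum b.coeff fun w2 c2 => (c1 * c2) • harmW (toZ w1) (toZ w2)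

/-- The n-harmonic product `*̄` on `H¹`, extended ℚ-bilinearly. -/
noncomputable def nharm (a b : H) : H :=
  Finsupp.sum a.coeff fun w1 c1 =>
    Finsupp.sum b.coeff fun w2 c2 => (c1 * c2) • nharmW (toZ w1) (toZ w2)

/-- The letter exchange `τ(x) = y`, `τ(y) = x`. -/
def τ : Letter → Letter
  | Letter.x => Letter.y
  | Letter.y => Letter.x

/-- `δ(w) = 1` if `w` is the empty word, `0` otherwise. -/
def δ : List Letter → ℚ
  | [] => 1
  | _ :: _ => 0

/-- The shuffle product on words:
`1 ш w = w ш 1 = w` and `u₁w₁ ш u₂w₂ = u₁(w₁ ш u₂w₂) + u₂(u₁w₁ ш w₂)`. -/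
noncomputable def shW : List Letter → List Letter → H
  | [], w => word (FreeMonoid.ofList w)
  | u :: w, [] => word (FreeMonoid.ofList (u :: w))
  | u1 :: w1, u2 :: w2 =>
      word (FreeMonoid.of u1) * shW w1 (u2 :: w2) +
        word (FreeMonoid.of u2) * shW (u1 :: w1) w2
termination_by w1 w2 => w1.length + w2.length
decreasing_by all_goals simp [Nat.lt_succ_iff]

/-- The n-shuffle product on words: `1 ш̄ w = w ш̄ 1 = w` and
`u₁w₁ ш̄ u₂w₂ = u₁(w₁ ш̄ u₂w₂) + u₂(u₁w₁ ш̄ w₂) − δ(w₁)τ(u₁)u₂w₂ − δ(w₂)τ(u₂)u₁w₁`. -/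
noncomputable def nshW : List Letter → List Letter → H
  | [], w => word (FreeMonoid.ofList w)
  | u :: w, [] => word (FreeMonoid.ofList (u :: w))
  | u1 :: w1, u2 :: w2 =>
      word (FreeMonoid.of u1) * nshW w1 (u2 :: w2) +
        word (FreeMonoid.of u2) * nshW (u1 :: w1) w2 -
        δ w1 • word (FreeMonoid.ofList (τ u1 :: u2 :: w2)) -
        δ w2 • word (FreeMonoid.ofList (τ u2 :: u1 :: w1))
termination_by w1 w2 => w1.length + w2.length
decreasing_by all_goals simp [Nat.lt_succ_iff]

/-- The shuffle product `ш` on `H`, extended ℚ-bilinearly. -/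
noncomputable def sh (a b : H) : H :=
  Finsupp.sum a.coeff fun w1 c1 =>
    Finsupp.sum b.coeff fun w2 c2 =>
      (c1 * c2) • shW (FreeMonoid.toList w1) (FreeMonoid.toList w2)

/-- The n-shuffle product `ш̄` on `H`, extended ℚ-bilinearly. -/
noncomputable def nsh (a b : H) : H :=
  Finsupp.sum a.coeff fun w1 c1 =>
    Finsupp.sum b.coeff fun w2 c2 =>
      (c1 * c2) • nshW (FreeMonoid.toList w1) (FreeMonoid.toList w2)

/-- `S₁`: the ℚ-algebra endomorphism of `H` with `S₁(x) = x`, `S₁(y) = x + y`. -/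
noncomputable def S1 : H →ₐ[ℚ] H :=
  MonoidAlgebra.lift ℚ H (FreeMonoid Letter)
    (FreeMonoid.lift fun u => match u with
      | Letter.x => X
      | Letter.y => X + Y)

/-- `S₂`: the ℚ-algebra endomorphism of `H` with `S₂(x) = x`, `S₂(y) = y − x`. -/
noncomputable def S2 : H →ₐ[ℚ] H :=
  MonoidAlgebra.lift ℚ H (FreeMonoid Letter)
    (FreeMonoid.lift fun u => match u with
      | Letter.x => X
      | Letter.y => Y - X)

/-- `S` on a word: `S(1) = 1` and `S(Fy) = S₁(F)y`. -/
noncomputable def SW (w : FreeMonoid Letter) : H :=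
  match (FreeMonoid.toList w).getLast? with
  | some Letter.y =>
      S1 (word (FreeMonoid.ofList (FreeMonoid.toList w).dropLast)) * Y
  | _ => word w

/-- The ℚ-linear map `S : H¹ → H¹` with `S(1) = 1`, `S(Fy) = S₁(F)y`. -/
noncomputable def S (a : H) : H := Finsupp.sum a.coeff fun w c => c • SW w

/-- `S̃` on a word: `S̃(1) = 1` and `S̃(Fy) = S₂(F)y`. -/
noncomputable def StW (w : FreeMonoid Letter) : H :=
  match (FreeMonoid.toList w).getLast? with
  | some Letter.y =>
      S2 (word (FreeMonoid.ofList (FreeMonoid.toList w).dropLast)) * Y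
  | _ => word w

/-- The ℚ-linear map `S̃ : H¹ → H¹` with `S̃(1) = 1`, `S̃(Fy) = S₂(F)y`. -/
noncomputable def St (a : H) : H := Finsupp.sum a.coeff fun w c => c • StW w

/-- The multiple zeta value `ζ(k₁,…,kₙ)`: the sum over strictly decreasing
tuples `m₁ > m₂ > ⋯ > mₙ > 0` of `1/(m₁^{k₁}⋯mₙ^{kₙ})`. -/
noncomputable def mzeta (ks : List ℕ) : ℝ :=
  ∑' m : {f : Fin ks.length → ℕ // (∀ i, 0 < f i) ∧
      ∀ i j : Fin ks.length, i < j → f j < f i},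
    ∏ i : Fin ks.length, ((m.1 i : ℝ) ^ ks.get i)⁻¹

/-- The non-strict multiple zeta value `ζ̄(k₁,…,kₙ)`: the sum over weakly
decreasing tuples `m₁ ≥ m₂ ≥ ⋯ ≥ mₙ > 0` of `1/(m₁^{k₁}⋯mₙ^{kₙ})`. -/
noncomputable def nmzeta (ks : List ℕ) : ℝ :=
  ∑' m : {f : Fin ks.length → ℕ // (∀ i, 0 < f i) ∧
      ∀ i j : Fin ks.length, i ≤ j → f j ≤ f i},
    ∏ i : Fin ks.length, ((m.1 i : ℝ) ^ ks.get i)⁻¹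

/-- The evaluation map `Z : H⁰ → ℝ`, `Z(1) = 1`,
`Z(z_{k₁}⋯z_{kₙ}) = ζ(k₁,…,kₙ)` (extended ℚ-linearly to `H`). -/
noncomputable def Z (a : H) : ℝ := Finsupp.sum a.coeff fun w c => (c : ℝ) * mzeta (toZ w)

/-- The n-evaluation map `Z̄ : H⁰ → ℝ`, `Z̄(1) = 1`,
`Z̄(z_{k₁}⋯z_{kₙ}) = ζ̄(k₁,…,kₙ)` (extended ℚ-linearly to `H`). -/
noncomputable def Zbar (a : H) : ℝ := Finsupp.sum a.coeff fun w c => (c : ℝ) * nmzeta (toZ w)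

/-- `i`-fold n-harmonic power: `a^{*̄ 0} = 1`, `a^{*̄ (i+1)} = a *̄ a^{*̄ i}`. -/
noncomputable def nharmPow : ℕ → H → H
  | 0, _ => 1
  | i + 1, a => nharm a (nharmPow i a)

/-- `i`-fold n-shuffle power: `a^{ш̄ 0} = 1`, `a^{ш̄ (i+1)} = a ш̄ a^{ш̄ i}`. -/
noncomputable def nshPow : ℕ → H → H
  | 0, _ => 1
  | i + 1, a => nsh a (nshPow i a)

end H

open H

/-!
The proof evaluates formal iterated integrals at `t = 1`. Attach to a word its polylogarithm, the
power series obtained by starting from `1` and integrating, letter by letter from the right, against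
`dt/t` for `x` and `dt/(t(1-t))` for `y`, the divergent part of each integrand being discarded. Its
`m`-th coefficient is the part of `ζ̄` with `m₁ = m`, so the coefficients sum to `ζ̄`.

With `θ = t d/dt`, the polylogarithm `L` satisfies `θ L(uw) = ω_u L(w) - δ(w)`. By the Leibniz rule
the n-shuffle recursion is then what multiplication of polylogarithms of words in `H¹` obeys: there
`δ(w) = 1` forces `u = y`, whence `ω_{τ(u)} = 1` and the correction terms of `ш̄` cancel the
constants `δ(w)`. Summing coefficients turns the Cauchy product into the product of the values.
-/

section FormalPowerSeries

open PowerSeries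

/-- The Euler derivation `θ = t d/dt` on power series. -/
noncomputable def eulerDerivation (R : Type*) [CommSemiring R] : Derivation R R⟦X⟧ R⟦X⟧ :=
  (PowerSeries.X : R⟦X⟧) • derivative R

theorem coeff_eulerDerivation {R : Type*} [CommSemiring R] (f : R⟦X⟧) (m : ℕ) :
    coeff m (eulerDerivation R f) = m * coeff m f := by
  cases m with
  | zero => simp [eulerDerivation]
  | succ m => simp [eulerDerivation, coeff_succ_X_mul, coeff_derivative, mul_comm]

theorem eulerDerivation_ext {R : Type*} [CommRing R] [IsAddTorsionFree R] {f g : R⟦X⟧}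
    (hconst : constantCoeff f = constantCoeff g)
    (htheta : eulerDerivation R f = eulerDerivation R g) : f = g :=
  derivative.ext (X_mul_inj.mp htheta) hconst

/-- The formal primitive of `f dt/t` without constant term. The constant term of `f`, whose
primitive would be a logarithm, is dropped: this is the value `a / 0 = 0` at index `0`. -/
noncomputable def logPrimitive (K : Type*) [Field K] : K⟦X⟧ →ₗ[K] K⟦X⟧ where
  toFun f := PowerSeries.mk fun m => coeff m f / m
  map_add' f g := by ext m; simp [add_div]
  map_smul' c f := by ext m; simp [mul_div_assoc]

variable {K : Type*} [Field K]

theorem coeff_logPrimitive (f : K⟦X⟧) (m : ℕ) : coeff m (logPrimitive K f) = coeff m f / m := by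
  simp [logPrimitive]

theorem constantCoeff_logPrimitive (f : K⟦X⟧) : constantCoeff (logPrimitive K f) = 0 := by
  rw [← coeff_zero_eq_constantCoeff_apply, coeff_logPrimitive, Nat.cast_zero, div_zero]

theorem eulerDerivation_logPrimitive [CharZero K] (f : K⟦X⟧) :
    eulerDerivation K (logPrimitive K f) = f - C (constantCoeff f) := by
  ext m
  rw [coeff_eulerDerivation, coeff_logPrimitive]
  cases m with
  | zero => simp
  | succ m => simpa [coeff_C] using mul_div_cancel₀ _ (Nat.cast_add_one_ne_zero m)

theorem coeff_mk_one_mul {R : Type*} [Semiring R] (f : R⟦X⟧) (m : ℕ) :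
    coeff m (PowerSeries.mk 1 * f) = ∑ j ∈ Finset.range (m + 1), coeff j f := by
  rw [coeff_mul, Finset.Nat.sum_antidiagonal_eq_sum_range_succ_mk,
    ← Finset.sum_range_reflect]
  refine Finset.sum_congr rfl fun j hj => ?_
  simp [Nat.sub_sub_self (Finset.mem_range_succ_iff.mp hj)]

theorem tsum_coeff_mul {R : Type*} [NormedRing R] [CompleteSpace R] {f g : R⟦X⟧}
    (hf : Summable fun m => ‖coeff m f‖) (hg : Summable fun m => ‖coeff m g‖) :
    ∑' m, coeff m (f * g) = (∑' m, coeff m f) * ∑' m, coeff m g := by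
  simp only [coeff_mul]
  exact (tsum_mul_tsum_eq_tsum_sum_antidiagonal_of_summable_norm hf hg).symm

end FormalPowerSeries

section DecreasingTuples

open scoped ENNReal

/-- The index set of the non-strict multiple zeta values, truncated at `N`: tuples
`N ≥ m₁ ≥ ⋯ ≥ mₙ > 0`. The bound lies in `ℕ∞` so that `N = ⊤` gives the full series. -/
def decreasingTuples (n : ℕ) (N : ℕ∞) : Set (Fin n → ℕ) :=
  {f | (∀ i, 0 < f i ∧ (f i : ℕ∞) ≤ N) ∧ Antitone f}

theorem cons_mem_decreasingTuples {n m : ℕ} {N : ℕ∞} {g : Fin n → ℕ} :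
    (Fin.cons m g : Fin (n + 1) → ℕ) ∈ decreasingTuples (n + 1) N ↔
      (0 < m ∧ (m : ℕ∞) ≤ N) ∧ g ∈ decreasingTuples n m := by
  have hantitone : Antitone (Fin.cons m g : Fin (n + 1) → ℕ) ↔ (∀ i, g i ≤ m) ∧ Antitone g := by
    simp [Antitone, Fin.forall_fin_succ]
  simp only [decreasingTuples, Set.mem_ofPred_eq, hantitone, Fin.forall_fin_succ, Fin.cons_zero,
    Fin.cons_succ, Nat.cast_le]
  constructor
  · rintro ⟨⟨hm, hg⟩, hle, hanti⟩
    exact ⟨hm, fun i => ⟨(hg i).1, hle i⟩, hanti⟩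
  · rintro ⟨hm, hg, hanti⟩
    exact ⟨⟨hm, fun i => ⟨(hg i).1, (Nat.cast_le.mpr (hg i).2).trans hm.2⟩⟩, fun i => (hg i).2,
      hanti⟩

/-- A weakly decreasing tuple is its first entry followed by a tuple bounded by that entry. -/
def decreasingTuplesSuccEquiv (n : ℕ) (N : ℕ∞) :
    decreasingTuples (n + 1) N ≃
      Σ m : {m : ℕ | 0 < m ∧ (m : ℕ∞) ≤ N}, decreasingTuples n (m : ℕ) where
  toFun f :=
    have h := cons_mem_decreasingTuples.mp ((Fin.cons_self_tail f.1).symm ▸ f.2)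
    ⟨⟨f.1 0, h.1⟩, ⟨Fin.tail f.1, h.2⟩⟩
  invFun p := ⟨Fin.cons p.1.1 p.2.1, cons_mem_decreasingTuples.mpr ⟨p.1.2, p.2.2⟩⟩
  left_inv f := Subtype.ext (Fin.cons_self_tail f.1)
  right_inv _ := rfl

/-- The series `ζ̄(k₁,…,kₙ)` truncated to `m₁ ≤ N`, in `ℝ≥0∞` so that convergence is not an
issue when it is rearranged. -/
noncomputable def nmzetaUpTo (ks : List ℕ) (N : ℕ∞) : ℝ≥0∞ :=
  ∑' f : decreasingTuples ks.length N, ∏ i, ((f.1 i : ℝ≥0∞) ^ ks.get i)⁻¹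

theorem nmzetaUpTo_nil (N : ℕ∞) : nmzetaUpTo [] N = 1 := by
  have huniv : decreasingTuples 0 N = Set.univ :=
    Set.eq_univ_of_forall fun _ => ⟨fun i => i.elim0, fun i => i.elim0⟩
  simp [nmzetaUpTo, huniv]

theorem nmzetaUpTo_cons (k : ℕ) (ks : List ℕ) (N : ℕ∞) :
    nmzetaUpTo (k :: ks) N =
      ∑' m : {m : ℕ | 0 < m ∧ (m : ℕ∞) ≤ N}, ((m : ℝ≥0∞) ^ k)⁻¹ * nmzetaUpTo ks (m : ℕ) := by
  calc nmzetaUpTo (k :: ks) N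
      = ∑' p : Σ m : {m : ℕ | 0 < m ∧ (m : ℕ∞) ≤ N}, decreasingTuples ks.length (m : ℕ),
          ((p.1 : ℝ≥0∞) ^ k)⁻¹ * ∏ i, ((p.2.1 i : ℝ≥0∞) ^ ks.get i)⁻¹ :=
        ((decreasingTuplesSuccEquiv ks.length N).symm.tsum_eq _).symm.trans
          (tsum_congr fun _ => Fin.prod_univ_succ _)
    _ = _ := by simp only [ENNReal.tsum_sigma', ENNReal.tsum_mul_left, nmzetaUpTo]

theorem nmzeta_eq_toReal_nmzetaUpTo_top (ks : List ℕ) :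
    nmzeta ks = (nmzetaUpTo ks ⊤).toReal := by
  have hne_top (f : decreasingTuples ks.length ⊤) :
      ∏ i, ((f.1 i : ℝ≥0∞) ^ ks.get i)⁻¹ ≠ ∞ :=
    ENNReal.prod_ne_top fun i _ => ENNReal.inv_ne_top.mpr
      (pow_ne_zero _ (Nat.cast_ne_zero.mpr (f.2.1 i).1.ne'))
  have hmem (f : Fin ks.length → ℕ) : ((∀ i, 0 < f i) ∧ ∀ i j, i ≤ j → f j ≤ f i) ↔
      f ∈ decreasingTuples ks.length ⊤ := by
    simp [decreasingTuples, Antitone]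
  rw [nmzetaUpTo, ENNReal.tsum_toReal_eq hne_top, nmzeta,
    ← (Equiv.subtypeEquivRight hmem).tsum_eq]
  simp [ENNReal.toReal_prod]

theorem tsum_pos_le_eq_tsum_le (N : ℕ∞) {g : ℕ → ℝ≥0∞} (hg : g 0 = 0) :
    ∑' m : {m : ℕ | 0 < m ∧ (m : ℕ∞) ≤ N}, g m = ∑' m : {m : ℕ | (m : ℕ∞) ≤ N}, g m := by
  rw [tsum_subtype _ g, tsum_subtype _ g]
  congr 1 with m
  rcases m.eq_zero_or_pos with rfl | hm <;> simp [Set.indicator_apply, *]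

theorem tsum_le_natCast_eq_sum_range (n : ℕ) (g : ℕ → ℝ≥0∞) :
    ∑' m : {m : ℕ | (m : ℕ∞) ≤ n}, g m = ∑ m ∈ Finset.range (n + 1), g m := by
  have hset : {m : ℕ | (m : ℕ∞) ≤ n} = Finset.range (n + 1) := by ext m; simp
  rw [hset, Finset.tsum_subtype' (Finset.range (n + 1)) g]

end DecreasingTuples

namespace H

open PowerSeries (coeff constantCoeff C mk)
open scoped PowerSeries ENNReal

section Words

/-- The words spanning `H¹`: the empty word and the words ending in `y`. -/
def IsH1Word (w : List Letter) : Prop := w.getLast? ≠ some Letter.x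

/-- The words spanning `H⁰`: the empty word and the words starting with `x` and ending in `y`. -/
def IsH0Word (w : List Letter) : Prop := w.head? ≠ some Letter.y ∧ IsH1Word w

theorem isH1Word_cons {u : Letter} {w : List Letter} :
    IsH1Word (u :: w) ↔ IsH1Word w ∧ (w = [] → u = Letter.y) := by
  cases w <;> cases u <;> simp [IsH1Word]

theorem isH1Word_append_y (w : List Letter) : IsH1Word (w ++ [Letter.y]) := by
  simp [IsH1Word]

theorem IsH1Word.exists_eq_append_y {w : List Letter} (hw : IsH1Word w) (hne : w ≠ []) :
    ∃ v, w = v ++ [Letter.y] := by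
  obtain ⟨v, u, rfl⟩ := w.eq_nil_or_concat'.resolve_left hne
  cases u with
  | x => simp [IsH1Word] at hw
  | y => exact ⟨v, rfl⟩

theorem IsH0Word.eq_nil_or_eq_cons_x {w : List Letter} (hw : IsH0Word w) :
    w = [] ∨ ∃ v, w = Letter.x :: v ∧ v ≠ [] ∧ IsH1Word v := by
  obtain ⟨hhead, hlast⟩ := hw
  match w with
  | [] => exact .inl rfl
  | Letter.y :: v => simp at hhead
  | Letter.x :: v =>
    obtain ⟨hv, hnil⟩ := isH1Word_cons.mp hlast
    exact .inr ⟨v, rfl, fun h => by simpa using hnil h, hv⟩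

theorem word_mul_word (v w : FreeMonoid Letter) : word v * word w = word (v * w) := by
  simp [word, MonoidAlgebra.single_mul_single]

theorem word_mem_span_Y {w : List Letter} (hw : IsH1Word w) (hne : w ≠ []) :
    word (.ofList w) ∈ Ideal.span {Y} := by
  obtain ⟨v, rfl⟩ := hw.exists_eq_append_y hne
  exact Ideal.mem_span_singleton'.mpr ⟨word (.ofList v), word_mul_word _ _⟩

theorem X_mul_mem_H0 {h : H} (hh : h ∈ Ideal.span {Y}) : X * h ∈ H0 := by
  obtain ⟨g, rfl⟩ := Ideal.mem_span_singleton'.mp hh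
  exact Submodule.mem_sup_left ⟨g, mul_assoc X g Y⟩

theorem word_mem_H0 {w : List Letter} (hw : IsH0Word w) : word (.ofList w) ∈ H0 := by
  obtain rfl | ⟨v, rfl, hne, hv⟩ := hw.eq_nil_or_eq_cons_x
  · exact Submodule.mem_sup_right (Submodule.mem_span_singleton_self 1)
  · simpa [X, word_mul_word] using X_mul_mem_H0 (word_mem_span_Y hv hne)

theorem H0_le_H1 : H0 ≤ H1 := by
  refine sup_le_sup_right ?_ _
  rintro _ ⟨g, rfl⟩
  exact ⟨X * g, rfl⟩

theorem range_le_of_forall_word {f : H →ₗ[ℚ] H} {P : Submodule ℚ H} (hf : ∀ w, f (word w) ∈ P) :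
    LinearMap.range f ≤ P := by
  rw [LinearMap.range_eq_map, ← (MonoidAlgebra.basis (FreeMonoid Letter) ℚ).span_eq,
    Submodule.map_span_le]
  rintro _ ⟨w, rfl⟩
  exact hf w

theorem H1_le_span_word :
    H1 ≤ Submodule.span ℚ ((fun w => word (.ofList w)) '' {w | IsH1Word w}) := by
  refine sup_le (range_le_of_forall_word fun w => ?_) ?_
  · exact Submodule.subset_span
      ⟨w.toList ++ [Letter.y], isH1Word_append_y _, (word_mul_word w _).symm⟩
  · exact Submodule.span_mono (Set.singleton_subset_iff.mpr ⟨[], by simp [IsH1Word], rfl⟩)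

theorem H0_le_span_word :
    H0 ≤ Submodule.span ℚ ((fun w => word (.ofList w)) '' {w | IsH0Word w}) := by
  refine sup_le (range_le_of_forall_word fun w => ?_) ?_
  · refine Submodule.subset_span ⟨Letter.x :: (w.toList ++ [Letter.y]),
      ⟨by simp, isH1Word_append_y (Letter.x :: w.toList)⟩, ?_⟩
    simp [X, Y, word_mul_word, mul_assoc]
  · exact Submodule.span_mono
      (Set.singleton_subset_iff.mpr ⟨[], by simp [IsH0Word, IsH1Word], rfl⟩)

end Words

section Linearization

/-- The n-shuffle product as a bilinear map. -/
noncomputable def nshBilin : H →ₗ[ℚ] H →ₗ[ℚ] H :=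
  (MonoidAlgebra.basis _ ℚ).constr ℚ fun w1 =>
    (MonoidAlgebra.basis _ ℚ).constr ℚ fun w2 => nshW w1.toList w2.toList

theorem nshBilin_apply (a b : H) : nshBilin a b = nsh a b := by
  simp [nshBilin, nsh, Module.Basis.constr_apply, Finsupp.sum, LinearMap.sum_apply,
    Finset.smul_sum, mul_smul, MonoidAlgebra.basis]

theorem nsh_word (w1 w2 : List Letter) :
    nsh (word (.ofList w1)) (word (.ofList w2)) = nshW w1 w2 := by
  simp [nsh, word]

/-- The n-evaluation map as a `ℚ`-linear map on all of `H`. -/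
noncomputable def ZbarLin : H →ₗ[ℚ] ℝ :=
  (MonoidAlgebra.basis _ ℚ).constr ℚ fun w => nmzeta (toZ w)

theorem ZbarLin_apply (a : H) : ZbarLin a = Zbar a := by
  simp [ZbarLin, Zbar, Module.Basis.constr_apply, Rat.smul_def, MonoidAlgebra.basis]

theorem Zbar_word (w : List Letter) : Zbar (word (.ofList w)) = nmzeta (toZAux w 0) := by
  simp [Zbar, word, toZ]

end Linearization

section Closure

theorem nshW_mem_span_Y {w1 w2 : List Letter} (h1 : IsH1Word w1) (h2 : IsH1Word w2)
    (hne : w1 ≠ [] ∨ w2 ≠ []) : nshW w1 w2 ∈ Ideal.span {Y} := by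
  induction w1, w2 using nshW.induct with
  | case1 w => simpa [nshW] using word_mem_span_Y h2 (by simpa using hne)
  | case2 u w => simpa [nshW] using word_mem_span_Y h1 (by simp)
  | case3 u1 w1 u2 w2 ih1 ih2 =>
    have hcorr {u v : Letter} {w : List Letter} (h : IsH1Word (v :: w)) :
        word (.ofList (τ u :: v :: w)) ∈ Ideal.span {Y} :=
      word_mem_span_Y (isH1Word_cons.mpr ⟨h, by simp⟩) (by simp)
    rw [nshW]
    exact sub_mem (sub_mem
      (add_mem (Ideal.mul_mem_left _ _ (ih1 (isH1Word_cons.mp h1).1 h2 (by simp)))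
        (Ideal.mul_mem_left _ _ (ih2 h1 (isH1Word_cons.mp h2).1 (by simp))))
      (Submodule.smul_of_tower_mem _ _ (hcorr h2))) (Submodule.smul_of_tower_mem _ _ (hcorr h1))

theorem δ_eq_zero {w : List Letter} (hne : w ≠ []) : δ w = 0 := by
  cases w with
  | nil => exact absurd rfl hne
  | cons => rfl

theorem nshW_mem_H0 {w1 w2 : List Letter} (h1 : IsH0Word w1) (h2 : IsH0Word w2) :
    nshW w1 w2 ∈ H0 := by
  obtain rfl | ⟨v1, rfl, hne1, hv1⟩ := h1.eq_nil_or_eq_cons_x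
  · simpa [nshW] using word_mem_H0 h2
  obtain rfl | ⟨v2, rfl, hne2, hv2⟩ := h2.eq_nil_or_eq_cons_x
  · simpa [nshW] using word_mem_H0 h1
  simp only [nshW, δ_eq_zero hne1, δ_eq_zero hne2, zero_smul, sub_zero]
  exact add_mem (X_mul_mem_H0 (nshW_mem_span_Y hv1 h2.2 (.inl hne1)))
    (X_mul_mem_H0 (nshW_mem_span_Y h1.2 hv2 (.inr hne2)))

theorem nsh_mem_H0 {a b : H} (ha : a ∈ H0) (hb : b ∈ H0) : nsh a b ∈ H0 := by
  rw [← nshBilin_apply]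
  refine LinearMap.BilinMap.apply_apply_mem_of_mem_span H0 _ _ nshBilin ?_ a b
    (H0_le_span_word ha) (H0_le_span_word hb)
  rintro _ ⟨w1, h1, rfl⟩ _ ⟨w2, h2, rfl⟩
  rw [nshBilin_apply, nsh_word]
  exact nshW_mem_H0 h1 h2

end Closure

section Polylogarithm

/-- The series `ω_u` such that the letter `u` stands for the differential form `ω_u dt/t`:
`ω_x = 1` and `ω_y = 1/(1-t)`. -/
noncomputable def letterForm : Letter → ℝ⟦X⟧
  | Letter.x => 1
  | Letter.y => mk 1

/-- The (non-strict) polylogarithm of a word as a formal iterated integral. The coefficient of `t^m`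
in the polylogarithm of `z_{k₁}⋯z_{kₙ}` is the part of the series `ζ̄(k₁,…,kₙ)` with `m₁ = m`. -/
noncomputable def polylog : List Letter → ℝ⟦X⟧
  | [] => 1
  | u :: w => logPrimitive ℝ (letterForm u * polylog w)

/-- The polylogarithm extended `ℚ`-linearly to `H`. -/
noncomputable def polylogLin : H →ₗ[ℚ] ℝ⟦X⟧ :=
  (MonoidAlgebra.basis _ ℚ).constr ℚ fun w => polylog w.toList

theorem polylogLin_word (w : List Letter) : polylogLin (word (.ofList w)) = polylog w :=
  (MonoidAlgebra.basis _ ℚ).constr_basis ℚ _ _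

theorem polylogLin_letter_mul (u : Letter) (h : H) :
    polylogLin (word (.of u) * h) = logPrimitive ℝ (letterForm u * polylogLin h) := by
  have hlin : polylogLin ∘ₗ LinearMap.mulLeft ℚ (word (.of u)) =
      ((logPrimitive ℝ).restrictScalars ℚ ∘ₗ LinearMap.mulLeft ℚ (letterForm u)) ∘ₗ polylogLin :=
    (MonoidAlgebra.basis _ ℚ).ext fun w =>
      (congrArg polylogLin (word_mul_word _ w)).trans ((polylogLin_word (u :: w.toList)).trans
        (congrArg _ (congrArg _ (polylogLin_word w.toList).symm)))
  exact LinearMap.congr_fun hlin h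

theorem constantCoeff_letterForm (u : Letter) : constantCoeff (letterForm u) = 1 := by
  cases u with
  | x => simp [letterForm]
  | y => simp [letterForm, ← PowerSeries.coeff_zero_eq_constantCoeff_apply]

theorem constantCoeff_polylog (w : List Letter) : constantCoeff (polylog w) = δ w := by
  cases w <;> simp [polylog, δ, constantCoeff_logPrimitive]

theorem eulerDerivation_polylog_cons (u : Letter) (w : List Letter) :
    eulerDerivation ℝ (polylog (u :: w)) = letterForm u * polylog w - C (δ w : ℝ) := by
  rw [polylog, eulerDerivation_logPrimitive, map_mul, constantCoeff_letterForm,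
    constantCoeff_polylog, one_mul]

theorem δ_smul_letterForm_τ {u : Letter} {w : List Letter} (h : IsH1Word (u :: w)) :
    δ w • letterForm (τ u) = C (δ w : ℝ) := by
  cases w with
  | nil => simp [(isH1Word_cons.mp h).2 rfl, δ, τ, letterForm]
  | cons => simp [δ]

theorem δ_smul_eulerDerivation_polylog_τ_cons {u : Letter} {w : List Letter}
    (h : IsH1Word (u :: w)) (u' : Letter) (w' : List Letter) :
    δ w • eulerDerivation ℝ (polylog (τ u :: u' :: w')) = C (δ w : ℝ) * polylog (u' :: w') := by
  rw [eulerDerivation_polylog_cons, ← δ_smul_letterForm_τ h]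
  simp [δ]

theorem polylogLin_nshW {w1 w2 : List Letter} (h1 : IsH1Word w1) (h2 : IsH1Word w2) :
    polylogLin (nshW w1 w2) = polylog w1 * polylog w2 := by
  induction w1, w2 using nshW.induct with
  | case1 w => rw [nshW, polylogLin_word, polylog, one_mul]
  | case2 u w => rw [nshW, polylogLin_word, polylog.eq_1, mul_one]
  | case3 u1 w1 u2 w2 ih1 ih2 =>
    rw [nshW]
    simp only [map_add, map_sub, map_smul, polylogLin_letter_mul, polylogLin_word,
      ih1 (isH1Word_cons.mp h1).1 h2, ih2 h1 (isH1Word_cons.mp h2).1]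
    have hconst (u : Letter) (w : List Letter) : constantCoeff (polylog (u :: w)) = 0 := by
      simp [constantCoeff_polylog, δ]
    apply eulerDerivation_ext
    · simp [constantCoeff_logPrimitive, hconst]
    · simp only [map_add, map_sub, Derivation.map_smul_of_tower, Derivation.leibniz, smul_eq_mul,
        δ_smul_eulerDerivation_polylog_τ_cons h1, δ_smul_eulerDerivation_polylog_τ_cons h2]
      simp only [eulerDerivation_logPrimitive, eulerDerivation_polylog_cons, map_mul, hconst,
        mul_zero, zero_mul, map_zero, sub_zero]
      ring

theorem polylogLin_nsh {a b : H} (ha : a ∈ H1) (hb : b ∈ H1) :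
    polylogLin (nsh a b) = polylogLin a * polylogLin b := by
  rw [← nshBilin_apply]
  replace ha := H1_le_span_word ha
  replace hb := H1_le_span_word hb
  induction ha, hb using Submodule.span_induction₂ with
  | mem_mem a b ha hb =>
    obtain ⟨w1, h1, rfl⟩ := ha
    obtain ⟨w2, h2, rfl⟩ := hb
    rw [nshBilin_apply, nsh_word, polylogLin_nshW h1 h2, polylogLin_word, polylogLin_word]
  | zero_left => simp
  | zero_right => simp
  | add_left a a' b _ _ _ h h' => simp [h, h', add_mul]
  | add_right a b b' _ _ _ h h' => simp [h, h', mul_add]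
  | smul_left c a b _ _ h => simp [h]
  | smul_right c a b _ _ h => simp [h]

end Polylogarithm

section Coefficients

theorem coeff_polylog_nil (m : ℕ) : coeff m (polylog []) = if m = 0 then 1 else 0 :=
  PowerSeries.coeff_one m

theorem coeff_polylog_cons_x (w : List Letter) (m : ℕ) :
    coeff m (polylog (Letter.x :: w)) = coeff m (polylog w) / m := by
  rw [polylog, coeff_logPrimitive, letterForm, one_mul]

theorem coeff_polylog_cons_y (w : List Letter) (m : ℕ) :
    coeff m (polylog (Letter.y :: w)) =
      (∑ j ∈ Finset.range (m + 1), coeff j (polylog w)) / m := by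
  rw [polylog, coeff_logPrimitive, letterForm, coeff_mk_one_mul]

theorem coeff_polylog_singleton_y (m : ℕ) : coeff m (polylog [Letter.y]) = 1 / m := by
  simp [coeff_polylog_cons_y, coeff_polylog_nil]

theorem coeff_polylog_nonneg (w : List Letter) (m : ℕ) : 0 ≤ coeff m (polylog w) := by
  induction w generalizing m with
  | nil => rw [coeff_polylog_nil]; positivity
  | cons u w ih =>
    cases u with
    | x => rw [coeff_polylog_cons_x]; exact div_nonneg (ih m) m.cast_nonneg
    | y =>
      rw [coeff_polylog_cons_y]
      exact div_nonneg (Finset.sum_nonneg fun j _ => ih j) m.cast_nonneg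

-- `toZAux` counts in `n` the letters `x` read so far: each is a pending division by `m`. At the
-- end of the word it discards this count.
theorem nmzetaUpTo_toZAux {w : List Letter} (hw : IsH1Word w) {n : ℕ} (hn : w = [] → n = 0)
    (N : ℕ∞) : nmzetaUpTo (toZAux w n) N =
      ∑' m : {m : ℕ | (m : ℕ∞) ≤ N}, ENNReal.ofReal (coeff m (polylog w) / (m : ℝ) ^ n) := by
  induction w generalizing n N with
  | nil =>
    rw [hn rfl, toZAux, nmzetaUpTo_nil, tsum_eq_single ⟨0, show (0 : ℕ∞) ≤ N from zero_le⟩]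
    · simp [coeff_polylog_nil]
    · intro m hm
      have hm0 : (m : ℕ) ≠ 0 := fun h => hm (Subtype.ext h)
      simp [coeff_polylog_nil, hm0]
  | cons u w ih =>
    obtain ⟨hw', hnil⟩ := isH1Word_cons.mp hw
    cases u with
    | x =>
      rw [toZAux, ih hw' (fun h => by simpa using hnil h)]
      simp only [coeff_polylog_cons_x, div_div, pow_succ']
    | y =>
      have hterm (m : ℕ) (hm : 0 < m) :
          ((m : ℝ≥0∞) ^ (n + 1))⁻¹ * nmzetaUpTo (toZAux w 0) m =
            ENNReal.ofReal (coeff m (polylog (Letter.y :: w)) / (m : ℝ) ^ n) := by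
        simp only [ih hw' (fun _ => rfl), pow_zero, div_one]
        rw [tsum_le_natCast_eq_sum_range m fun j => ENNReal.ofReal (coeff j (polylog w)),
          ← ENNReal.ofReal_sum_of_nonneg fun j _ => coeff_polylog_nonneg w j,
          coeff_polylog_cons_y, div_div, ← pow_succ', ENNReal.ofReal_div_of_pos (by positivity),
          ENNReal.ofReal_pow m.cast_nonneg, ENNReal.ofReal_natCast, mul_comm, div_eq_mul_inv]
      rw [toZAux, nmzetaUpTo_cons, ← tsum_pos_le_eq_tsum_le N
        (g := fun m => ENNReal.ofReal (coeff m (polylog (Letter.y :: w)) / (m : ℝ) ^ n))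
        (by simp [coeff_polylog_cons_y])]
      exact tsum_congr fun m => hterm m m.2.1

theorem nmzeta_toZAux {w : List Letter} (hw : IsH1Word w) :
    nmzeta (toZAux w 0) = ∑' m, coeff m (polylog w) := by
  have huniv : {m : ℕ | (m : ℕ∞) ≤ ⊤} = Set.univ := by simp
  rw [nmzeta_eq_toReal_nmzetaUpTo_top, nmzetaUpTo_toZAux hw (fun _ => rfl), huniv,
    tsum_univ fun m : ℕ => ENNReal.ofReal (coeff m (polylog w) / (m : ℝ) ^ 0),
    ENNReal.tsum_toReal_eq fun _ => ENNReal.ofReal_ne_top]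
  simp [ENNReal.toReal_ofReal (coeff_polylog_nonneg w _)]

end Coefficients

section Convergence

theorem sum_range_one_div_sqrt_le (m : ℕ) :
    ∑ j ∈ Finset.range (m + 1), 1 / √(j : ℝ) ≤ 2 * √(m : ℝ) := by
  induction m with
  | zero => simp
  | succ m ih =>
    have hstep : 1 / √((m + 1 : ℕ) : ℝ) ≤ 2 * (√((m + 1 : ℕ) : ℝ) - √(m : ℝ)) := by
      rw [div_le_iff₀ (by positivity)]
      have hm := Real.sq_sqrt (m.cast_nonneg (α := ℝ))
      have hm1 := Real.sq_sqrt ((m + 1).cast_nonneg (α := ℝ))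
      push_cast at hm1 ⊢
      nlinarith [sq_nonneg (√((m : ℝ) + 1) - √(m : ℝ))]
    rw [Finset.sum_range_succ]
    linarith

-- The coefficients are of order `(log m)^r / m`, but unlike logarithmic bounds, a bound by a
-- multiple of `1 / √m` reproduces itself under the averaging of `coeff_polylog_cons_y`.
theorem coeff_polylog_le {w : List Letter} (hw : IsH1Word w) (hne : w ≠ []) (m : ℕ) :
    coeff m (polylog w) ≤ 2 ^ w.length / √(m : ℝ) := by
  induction w generalizing m with
  | nil => exact absurd rfl hne
  | cons u w ih =>
    rcases m.eq_zero_or_pos with rfl | hm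
    · cases u <;> simp [coeff_polylog_cons_x, coeff_polylog_cons_y]
    have hm1 : (1 : ℝ) ≤ m := Nat.one_le_cast.mpr hm
    obtain ⟨hw', hnil⟩ := isH1Word_cons.mp hw
    rcases eq_or_ne w [] with rfl | hw_ne
    · have hsqrt : √(m : ℝ) ≤ m := Real.sqrt_le_self_iff.mpr (.inr hm1)
      rw [hnil rfl, coeff_polylog_singleton_y]
      calc 1 / (m : ℝ) ≤ 1 / √(m : ℝ) := by gcongr
        _ ≤ 2 ^ [Letter.y].length / √(m : ℝ) := by gcongr; norm_num
    have hbound := ih hw' hw_ne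
    rw [List.length_cons, pow_succ]
    cases u with
    | x =>
      calc coeff m (polylog (Letter.x :: w)) = coeff m (polylog w) / m := coeff_polylog_cons_x w m
        _ ≤ coeff m (polylog w) := div_le_self (coeff_polylog_nonneg w m) hm1
        _ ≤ 2 ^ w.length / √(m : ℝ) := hbound m
        _ ≤ 2 ^ w.length * 2 / √(m : ℝ) := by
            gcongr
            exact le_mul_of_one_le_right (by positivity) one_le_two
    | y =>
      calc coeff m (polylog (Letter.y :: w))
          = (∑ j ∈ Finset.range (m + 1), coeff j (polylog w)) / m := coeff_polylog_cons_y w m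
        _ ≤ (∑ j ∈ Finset.range (m + 1), 2 ^ w.length * (1 / √(j : ℝ))) / m := by
            gcongr with j
            simpa only [mul_one_div] using hbound j
        _ ≤ 2 ^ w.length * (2 * √(m : ℝ)) / m := by
            rw [← Finset.mul_sum]
            gcongr
            exact sum_range_one_div_sqrt_le m
        _ = 2 ^ w.length * 2 / √(m : ℝ) := by
            rw [← mul_assoc, mul_div_assoc, Real.sqrt_div_self', mul_one_div]

theorem summable_coeff_polylog {w : List Letter} (hw : IsH0Word w) :
    Summable fun m => coeff m (polylog w) := by
  obtain rfl | ⟨v, rfl, hne, hv⟩ := hw.eq_nil_or_eq_cons_x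
  · exact summable_of_ne_finset_zero (s := {0}) fun m hm => by
      simpa [coeff_polylog_nil] using hm
  · have hmajorant : Summable fun m : ℕ => 2 ^ v.length * (1 / (m : ℝ) ^ (3 / 2 : ℝ)) :=
      (Real.summable_one_div_nat_rpow.mpr (by norm_num)).mul_left _
    refine hmajorant.of_nonneg_of_le (coeff_polylog_nonneg _) fun m => ?_
    have hpow : (m : ℝ) ^ (3 / 2 : ℝ) = √(m : ℝ) * m := by
      rw [Real.sqrt_eq_rpow, ← Real.rpow_add_one' m.cast_nonneg (by norm_num)]
      norm_num
    rw [coeff_polylog_cons_x, hpow, mul_one_div, ← div_div]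
    exact div_le_div_of_nonneg_right (coeff_polylog_le hv hne m) m.cast_nonneg

theorem hasSum_coeff_polylogLin {a : H} (ha : a ∈ H0) :
    HasSum (fun m => coeff m (polylogLin a)) (Zbar a) := by
  rw [← ZbarLin_apply]
  replace ha := H0_le_span_word ha
  induction ha using Submodule.span_induction with
  | mem a ha =>
    obtain ⟨w, hw, rfl⟩ := ha
    rw [ZbarLin_apply, Zbar_word, polylogLin_word, nmzeta_toZAux hw.2]
    exact (summable_coeff_polylog hw).hasSum
  | zero => simp
  | add a b _ _ ha hb => simpa using ha.add hb
  | smul c a _ ha => simpa using ha.const_smul c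

end Convergence

end H

/-- The n-evaluation map `Z̄` is multiplicative with respect to the
n-shuffle product: `Z̄(w₁ ш̄ w₂) = Z̄(w₁) Z̄(w₂)` for `w₁, w₂ ∈ H⁰`. -/
theorem Zbar_nsh_mul :
    ∀ w1 ∈ H0, ∀ w2 ∈ H0, Zbar (nsh w1 w2) = Zbar w1 * Zbar w2 := by
  intro w1 h1 w2 h2
  have hsum1 := hasSum_coeff_polylogLin h1
  have hsum2 := hasSum_coeff_polylogLin h2
  rw [← (hasSum_coeff_polylogLin (nsh_mem_H0 h1 h2)).tsum_eq,
    polylogLin_nsh (H0_le_H1 h1) (H0_le_H1 h2),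
    tsum_coeff_mul hsum1.summable.norm hsum2.summable.norm, hsum1.tsum_eq, hsum2.tsum_eq]
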